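/- arXiv:2301.07317 — 4 statements merged into one kernel-verified Lean document; each statement's English description precedes it below -/
import Mathlib

section
/- Let C, r be positive integers with r ≤ C, let K = C(C,r) (binomial coefficient), let F > 0 and M ≥ 0 be real numbers, and let Ω be a finite probability space carrying random variables W (taking values in a finite set), X, and Z_1, …, Z_C (each taking values in finite sets). Suppose: (i) H(W) = K·F; (ii) H(W | (X, Z_1, …, Z_C)) = 0 (decodability); (iii) I(W ; X) = 0 (security); (iv) H(Z_c) ≤ M·F for every c ∈ [C]. Then M ≥ C(C,r)/C. -/
/-- Probability of an event `E` under the probability mass function `μ`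
on a finite sample space `Ω`. -/
noncomputable def prob {Ω : Type*} [Fintype Ω] (μ : Ω → ℝ) (E : Set Ω) : ℝ :=
  ∑ ω, E.indicator μ ω

/-- Shannon entropy (in bits) of a discrete random variable `Y` with respect to the
probability mass function `μ` on the finite sample space `Ω`. -/
noncomputable def entropy {Ω α : Type*} [Fintype Ω] [Fintype α] (μ : Ω → ℝ) (Y : Ω → α) : ℝ :=
  - ∑ a : α, prob μ {ω | Y ω = a} * Real.logb 2 (prob μ {ω | Y ω = a})

/-- Conditional entropy `H(Y | X) = H(Y, X) - H(X)`. -/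
noncomputable def condEntropy {Ω α β : Type*} [Fintype Ω] [Fintype α] [Fintype β]
    (μ : Ω → ℝ) (Y : Ω → α) (X : Ω → β) : ℝ :=
  entropy μ (fun ω => (Y ω, X ω)) - entropy μ X

/-- Mutual information `I(Y ; X) = H(Y) + H(X) - H(Y, X)`. -/
noncomputable def mutualInfo {Ω α β : Type*} [Fintype Ω] [Fintype α] [Fintype β]
    (μ : Ω → ℝ) (Y : Ω → α) (X : Ω → β) : ℝ :=
  entropy μ Y + entropy μ X - entropy μ (fun ω => (Y ω, X ω))

/-!
Security makes the transmission `X` uninformative about the files `W`, so everything needed to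
decode must come from the caches. In `H(W) = I(W ; X) + H(W | X)`, adjoining the cache contents `Z`
to the condition costs at most their entropy, `H(W | X) ≤ H(W | X, Z) + H(Z)`, so security and
decodability leave `H(W) ≤ H(Z) ≤ ∑ c, H(Z c)`. The subadditivity behind both inequalities is Gibbs'
inequality for a joint law against the product of its marginals.
-/

theorem sum_mul_logb_le_sum_mul_logb {α : Type*} [Fintype α] {b : ℝ} (hb : 1 < b) {p q : α → ℝ}
    (hp : ∀ a, 0 ≤ p a) (hq : ∀ a, 0 ≤ q a) (hpq : ∀ a, p a ≠ 0 → q a ≠ 0)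
    (hsum : ∑ a, q a ≤ ∑ a, p a) :
    ∑ a, p a * Real.logb b (q a) ≤ ∑ a, p a * Real.logb b (p a) := by
  have hlog (a : α) : p a * Real.log (q a) - p a * Real.log (p a) ≤ q a - p a := by
    rcases eq_or_ne (p a) 0 with hpa | hpa
    · simpa [hpa] using hq a
    · have hp_pos : 0 < p a := (hp a).lt_of_ne' hpa
      have hq_pos : 0 < q a := (hq a).lt_of_ne' (hpq a hpa)
      calc p a * Real.log (q a) - p a * Real.log (p a)
          = p a * Real.log (q a / p a) := by rw [Real.log_div hq_pos.ne' hpa, mul_sub]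
        _ ≤ p a * (q a / p a - 1) :=
          mul_le_mul_of_nonneg_left (Real.log_le_sub_one_of_pos (div_pos hq_pos hp_pos)) (hp a)
        _ = q a - p a := by rw [mul_sub_one, mul_div_cancel₀ _ hpa]
  have hsum_log : ∑ a, p a * Real.log (q a) ≤ ∑ a, p a * Real.log (p a) := by
    have hsum_hlog := Finset.sum_le_sum fun a (_ : a ∈ Finset.univ) => hlog a
    simp only [Finset.sum_sub_distrib] at hsum_hlog
    linarith
  simp only [Real.logb, ← mul_div_assoc, ← Finset.sum_div]
  exact div_le_div_of_nonneg_right hsum_log (Real.log_pos hb).le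

section Entropy

variable {Ω α β γ : Type*} [Fintype Ω] {μ : Ω → ℝ}

theorem prob_nonneg (hμ : ∀ ω, 0 ≤ μ ω) (E : Set Ω) : 0 ≤ prob μ E :=
  Finset.sum_nonneg fun ω _ => Set.indicator_nonneg (fun ω _ => hμ ω) ω

theorem prob_mono (hμ : ∀ ω, 0 ≤ μ ω) {E E' : Set Ω} (h : E ⊆ E') : prob μ E ≤ prob μ E' :=
  Finset.sum_le_sum fun ω _ => Set.indicator_le_indicator_of_subset h hμ ω

theorem prob_pos (hμ : ∀ ω, 0 ≤ μ ω) {E : Set Ω} {ω : Ω} (hω : μ ω ≠ 0) (hE : ω ∈ E) :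
    0 < prob μ E :=
  Finset.sum_pos' (fun ω _ => Set.indicator_nonneg (fun ω _ => hμ ω) ω)
    ⟨ω, Finset.mem_univ ω, by simpa [hE] using (hμ ω).lt_of_ne' hω⟩

theorem prob_fiber_ne_zero (hμ : ∀ ω, 0 ≤ μ ω) (Y : Ω → α) {ω : Ω} (hω : μ ω ≠ 0) :
    prob μ {ω' | Y ω' = Y ω} ≠ 0 :=
  (prob_pos (E := {ω' | Y ω' = Y ω}) hμ hω rfl).ne'

theorem exists_mem_ne_zero_of_prob_ne_zero {E : Set Ω} (h : prob μ E ≠ 0) :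
    ∃ ω ∈ E, μ ω ≠ 0 := by
  obtain ⟨ω, -, hω⟩ := Finset.exists_ne_zero_of_sum_ne_zero h
  exact ⟨ω, Set.indicator_apply_ne_zero.mp hω⟩

variable [Fintype α] [Fintype β] [Fintype γ]

theorem sum_prob_mul (μ : Ω → ℝ) (Y : Ω → α) (f : α → ℝ) :
    ∑ a, prob μ {ω | Y ω = a} * f a = ∑ ω, μ ω * f (Y ω) := by
  classical
  simp only [prob, Finset.sum_mul]
  rw [Finset.sum_comm]
  simp [Set.indicator_apply, ite_mul]

theorem sum_prob (μ : Ω → ℝ) (Y : Ω → α) : ∑ a, prob μ {ω | Y ω = a} = ∑ ω, μ ω := by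
  simpa using sum_prob_mul μ Y 1

theorem entropy_eq_neg_sum (μ : Ω → ℝ) (Y : Ω → α) :
    entropy μ Y = -∑ ω, μ ω * Real.logb 2 (prob μ {ω' | Y ω' = Y ω}) := by
  rw [entropy, sum_prob_mul μ Y fun a => Real.logb 2 (prob μ {ω | Y ω = a})]

theorem entropy_comp_le (hμ : ∀ ω, 0 ≤ μ ω) (Y : Ω → α) (g : α → β) :
    entropy μ (fun ω => g (Y ω)) ≤ entropy μ Y := by
  rw [entropy_eq_neg_sum, entropy_eq_neg_sum]
  refine neg_le_neg (Finset.sum_le_sum fun ω _ => ?_)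
  rcases eq_or_ne (μ ω) 0 with hω | hω
  · simp [hω]
  · have hfiber : {ω' | Y ω' = Y ω} ⊆ {ω' | g (Y ω') = g (Y ω)} := fun _ => congrArg g
    exact mul_le_mul_of_nonneg_left
      (Real.logb_le_logb_of_le one_lt_two (prob_pos hμ hω rfl) (prob_mono hμ hfiber)) (hμ ω)

theorem entropy_le_neg_sum_mul_logb (hμ : ∀ ω, 0 ≤ μ ω) (Y : Ω → α) {q : α → ℝ}
    (hq : ∀ a, 0 ≤ q a) (hμq : ∀ ω, μ ω ≠ 0 → q (Y ω) ≠ 0) (hsum : ∑ a, q a ≤ ∑ ω, μ ω) :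
    entropy μ Y ≤ -∑ ω, μ ω * Real.logb 2 (q (Y ω)) := by
  rw [← sum_prob_mul μ Y fun a => Real.logb 2 (q a)]
  refine neg_le_neg (sum_mul_logb_le_sum_mul_logb one_lt_two (fun _ => prob_nonneg hμ _) hq
    (fun a ha => ?_) (hsum.trans_eq (sum_prob μ Y).symm))
  obtain ⟨ω, rfl, hω⟩ := exists_mem_ne_zero_of_prob_ne_zero ha
  exact hμq ω hω

theorem entropy_prod_le (hμ : ∀ ω, 0 ≤ μ ω) (hμ1 : ∑ ω, μ ω = 1) (X : Ω → α) (Y : Ω → β) :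
    entropy μ (fun ω => (X ω, Y ω)) ≤ entropy μ X + entropy μ Y := by
  let q (a : α × β) : ℝ := prob μ {ω | X ω = a.1} * prob μ {ω | Y ω = a.2}
  have hq (a : α × β) : 0 ≤ q a := mul_nonneg (prob_nonneg hμ _) (prob_nonneg hμ _)
  have hsum : ∑ a, q a = ∑ ω, μ ω := by
    simp [q, Fintype.sum_prod_type, ← Finset.mul_sum, sum_prob, hμ1]
  have hlog (ω : Ω) : μ ω * Real.logb 2 (q (X ω, Y ω)) =
      μ ω * Real.logb 2 (prob μ {ω' | X ω' = X ω}) +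
        μ ω * Real.logb 2 (prob μ {ω' | Y ω' = Y ω}) := by
    rcases eq_or_ne (μ ω) 0 with hω | hω
    · simp [hω]
    · rw [Real.logb_mul (prob_fiber_ne_zero hμ X hω) (prob_fiber_ne_zero hμ Y hω), mul_add]
  calc entropy μ (fun ω => (X ω, Y ω))
      ≤ -∑ ω, μ ω * Real.logb 2 (q (X ω, Y ω)) :=
        entropy_le_neg_sum_mul_logb hμ _ hq
          (fun _ hω => mul_ne_zero (prob_fiber_ne_zero hμ X hω) (prob_fiber_ne_zero hμ Y hω))
          hsum.le
    _ = entropy μ X + entropy μ Y := by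
        simp only [hlog, Finset.sum_add_distrib, neg_add, ← entropy_eq_neg_sum]

theorem condEntropy_le_condEntropy_prod_add_entropy (hμ : ∀ ω, 0 ≤ μ ω) (hμ1 : ∑ ω, μ ω = 1)
    (Y : Ω → α) (X : Ω → β) (Z : Ω → γ) :
    condEntropy μ Y X ≤ condEntropy μ Y (fun ω => (X ω, Z ω)) + entropy μ Z := by
  have hYX : entropy μ (fun ω => (Y ω, X ω)) ≤ entropy μ (fun ω => (Y ω, (X ω, Z ω))) :=
    entropy_comp_le hμ (fun ω => (Y ω, (X ω, Z ω))) fun a => (a.1, a.2.1)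
  have hXZ : entropy μ (fun ω => (X ω, Z ω)) ≤ entropy μ X + entropy μ Z :=
    entropy_prod_le hμ hμ1 X Z
  unfold condEntropy
  linarith

theorem entropy_eq_mutualInfo_add_condEntropy (μ : Ω → ℝ) (Y : Ω → α) (X : Ω → β) :
    entropy μ Y = mutualInfo μ Y X + condEntropy μ Y X := by
  unfold mutualInfo condEntropy
  ring

variable {ι : Type*} [Fintype ι] [DecidableEq ι] {ζ : ι → Type*} [∀ i, Fintype (ζ i)]

theorem entropy_pi_le (hμ : ∀ ω, 0 ≤ μ ω) (hμ1 : ∑ ω, μ ω = 1) (Z : (i : ι) → Ω → ζ i) :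
    entropy μ (fun ω i => Z i ω) ≤ ∑ i, entropy μ (Z i) := by
  let q (a : (i : ι) → ζ i) : ℝ := ∏ i, prob μ {ω | Z i ω = a i}
  have hq (a : (i : ι) → ζ i) : 0 ≤ q a := Finset.prod_nonneg fun _ _ => prob_nonneg hμ _
  have hsum : ∑ a, q a = ∑ ω, μ ω := by
    rw [← Fintype.prod_sum fun i z => prob μ {ω | Z i ω = z}]
    simp [sum_prob, hμ1]
  have hlog (ω : Ω) : μ ω * Real.logb 2 (q fun i => Z i ω) =
      ∑ i, μ ω * Real.logb 2 (prob μ {ω' | Z i ω' = Z i ω}) := by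
    rcases eq_or_ne (μ ω) 0 with hω | hω
    · simp [hω]
    · rw [Real.logb_prod _ _ fun i _ => prob_fiber_ne_zero hμ (Z i) hω, Finset.mul_sum]
  calc entropy μ (fun ω i => Z i ω)
      ≤ -∑ ω, μ ω * Real.logb 2 (q fun i => Z i ω) :=
        entropy_le_neg_sum_mul_logb hμ _ hq
          (fun _ hω => Finset.prod_ne_zero_iff.mpr fun i _ => prob_fiber_ne_zero hμ (Z i) hω)
          hsum.le
    _ = ∑ i, entropy μ (Z i) := by
        simp only [hlog, entropy_eq_neg_sum, Finset.sum_neg_distrib]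
        rw [Finset.sum_comm]

theorem entropy_le_mutualInfo_add_condEntropy_add_sum_entropy (hμ : ∀ ω, 0 ≤ μ ω)
    (hμ1 : ∑ ω, μ ω = 1) (W : Ω → α) (X : Ω → β) (Z : (i : ι) → Ω → ζ i) :
    entropy μ W ≤ mutualInfo μ W X + condEntropy μ W (fun ω => (X ω, fun i => Z i ω)) +
      ∑ i, entropy μ (Z i) := by
  calc entropy μ W
      = mutualInfo μ W X + condEntropy μ W X := entropy_eq_mutualInfo_add_condEntropy μ W X
    _ ≤ mutualInfo μ W X + (condEntropy μ W (fun ω => (X ω, fun i => Z i ω)) +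
          entropy μ (fun ω i => Z i ω)) := by
        gcongr
        exact condEntropy_le_condEntropy_prod_add_entropy hμ hμ1 W X fun ω i => Z i ω
    _ ≤ mutualInfo μ W X + (condEntropy μ W (fun ω => (X ω, fun i => Z i ω)) +
          ∑ i, entropy μ (Z i)) := by
        gcongr
        exact entropy_pi_le hμ hμ1 Z
    _ = _ := (add_assoc _ _ _).symm

theorem secure_multiaccess_memory_lower_bound_general [Nonempty ι] {K F M : ℝ} (hF : 0 < F)
    (hμ : ∀ ω, 0 ≤ μ ω) (hμ1 : ∑ ω, μ ω = 1) (W : Ω → α) (X : Ω → β) (Z : (i : ι) → Ω → ζ i)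
    (hHW : entropy μ W = K * F)
    (hdec : condEntropy μ W (fun ω => (X ω, fun i => Z i ω)) = 0)
    (hsec : mutualInfo μ W X = 0)
    (hZ : ∀ i, entropy μ (Z i) ≤ M * F) :
    K / Fintype.card ι ≤ M := by
  rw [div_le_iff₀ (Nat.cast_pos.mpr Fintype.card_pos)]
  refine le_of_mul_le_mul_right ?_ hF
  calc K * F
      = entropy μ W := hHW.symm
    _ ≤ ∑ i, entropy μ (Z i) := by
        simpa [hsec, hdec] using
          entropy_le_mutualInfo_add_condEntropy_add_sum_entropy hμ hμ1 W X Z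
    _ ≤ ∑ _i : ι, M * F := Finset.sum_le_sum fun i _ => hZ i
    _ = M * Fintype.card ι * F := by
        rw [Finset.sum_const, Finset.card_univ, nsmul_eq_mul]
        ring

end Entropy

/-- **Proposition 1**: for a secure multi-access coded caching scheme with distinct
demands, the cache memory satisfies `M ≥ C(C,r)/C`.  Here `W` is the tuple of
`K = C(C,r)` distinct demanded files (of `F` bits each, so `H(W) = K·F`), `X` is the
server transmission and `Z c` is the content of cache `c`, of size at most `M·F` bits. -/
theorem secure_multiaccess_memory_lower_bound
    (C r : ℕ) (hC : 0 < C) (hr : 0 < r) (hrC : r ≤ C)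
    (F M : ℝ) (hF : 0 < F) (hM : 0 ≤ M)
    {Ω : Type*} [Fintype Ω] (μ : Ω → ℝ)
    (hμ0 : ∀ ω, 0 ≤ μ ω) (hμ1 : ∑ ω, μ ω = 1)
    {𝒲 𝒳 : Type*} [Fintype 𝒲] [Fintype 𝒳]
    {ζ : Fin C → Type*} [∀ c, Fintype (ζ c)]
    (W : Ω → 𝒲) (X : Ω → 𝒳) (Z : (c : Fin C) → Ω → ζ c)
    (hHW : entropy μ W = (C.choose r : ℝ) * F)
    (hdec : condEntropy μ W (fun ω => (X ω, fun c => Z c ω)) = 0)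
    (hsec : mutualInfo μ W X = 0)
    (hZ : ∀ c, entropy μ (Z c) ≤ M * F) :
    M ≥ (C.choose r : ℝ) / C := by
  have : Nonempty (Fin C) := Fin.pos_iff_nonempty.mp hC
  simpa using
    secure_multiaccess_memory_lower_bound_general hF hμ0 hμ1 W X Z hHW hdec hsec hZ
end

section
/- Let C, r be positive integers with r ≤ C, let K = C(C,r), and let N be a real number with N ≥ 2·K·r. Define R* = K − (K²·r/N)·(1 − (C − r)/(C·(r + 1))). Then R* > 0 and K / R* ≤ 2. -/
/-!
At `M = r·K/C` memory sharing puts weight `M / (N/C) = K·r/N` on the second corner point, and this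
is at most `1/2` when `N ≥ 2·K·r`. So the rate `K` of the corner point at `M = 0` keeps weight at
least `1/2`, which gives `R* ≥ K/2`.
-/

open AffineMap (lineMap)

section MemorySharing

variable {𝕜 : Type*} [Field 𝕜]

/-- The optimal rate `R*(M)` under uncoded placement for cache memory `0 ≤ M ≤ N/C`, in the
combinatorial multi-access network with `C` caches, access degree `r` and `N` files: memory sharing
between the corner points `(0, C(C,r))` and `(N/C, C(C,r+1)/C)`. It is encoded as the affine
function through these two points, also for `M` outside the interval. -/
def uncodedRate (C r : ℕ) (N M : 𝕜) : 𝕜 :=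
  lineMap (C.choose r : 𝕜) ((C.choose (r + 1) : 𝕜) / C) (M / (N / C))

theorem cast_choose_succ [CharZero 𝕜] (n k : ℕ) :
    (n.choose (k + 1) : 𝕜) = n.choose k * (n - k) / (k + 1) := by
  rw [eq_div_iff k.cast_add_one_ne_zero]
  obtain hkn | hnk := le_or_gt k n
  · exact_mod_cast congrArg (Nat.cast (R := 𝕜)) (n.choose_succ_right_eq k)
  · simp [Nat.choose_eq_zero_of_lt hnk, Nat.choose_eq_zero_of_lt (Nat.lt_succ_of_lt hnk)]

theorem uncodedRate_choose_mul_div [CharZero 𝕜] {C : ℕ} (hC : C ≠ 0) (r : ℕ) (N : 𝕜) :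
    uncodedRate C r N (r * C.choose r / C) =
      C.choose r - ((C.choose r : 𝕜) ^ 2 * r / N) * (1 - ((C : 𝕜) - r) / (C * (r + 1))) := by
  have hC' : (C : 𝕜) ≠ 0 := Nat.cast_ne_zero.2 hC
  rw [uncodedRate, AffineMap.lineMap_apply_ring', div_div_div_cancel_right₀ hC', cast_choose_succ,
    div_div, mul_comm ((r : 𝕜) + 1)]
  ring

variable [LinearOrder 𝕜] [IsStrictOrderedRing 𝕜]

theorem one_sub_mul_le_lineMap {a b s t : 𝕜} (ha : 0 ≤ a) (hb : 0 ≤ b) (ht : 0 ≤ t)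
    (hts : t ≤ s) : (1 - s) * a ≤ lineMap a b t := by
  calc (1 - s) * a ≤ (1 - t) * a := by gcongr
    _ ≤ (1 - t) * a + t * b := le_add_of_nonneg_right (mul_nonneg ht hb)
    _ = lineMap a b t := (AffineMap.lineMap_apply_ring a b t).symm

theorem one_sub_mul_choose_le_uncodedRate {C : ℕ} (r : ℕ) {N M s : 𝕜} (hM : 0 ≤ M) (hN : 0 ≤ N)
    (hs : M / (N / C) ≤ s) : (1 - s) * C.choose r ≤ uncodedRate C r N M :=
  one_sub_mul_le_lineMap (by positivity) (by positivity) (by positivity) hs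

theorem sp_lfr_gap_general {C r : ℕ} (hC : C ≠ 0) (hrC : r ≤ C) {N s : 𝕜} (hN : 0 < N)
    (hs : s < 1) (hNs : C.choose r * r ≤ s * N) :
    0 < (C.choose r : 𝕜) -
        ((C.choose r : 𝕜) ^ 2 * r / N) * (1 - ((C : 𝕜) - r) / ((C : 𝕜) * (r + 1))) ∧
    (C.choose r : 𝕜) /
        ((C.choose r : 𝕜) -
          ((C.choose r : 𝕜) ^ 2 * r / N) * (1 - ((C : 𝕜) - r) / ((C : 𝕜) * (r + 1)))) ≤
      (1 - s)⁻¹ := by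
  have hC' : (C : 𝕜) ≠ 0 := Nat.cast_ne_zero.2 hC
  have hK : (0 : 𝕜) < C.choose r := Nat.cast_pos.2 (Nat.choose_pos hrC)
  have hs' : 0 < 1 - s := sub_pos.2 hs
  have hweight : (r * C.choose r / C : 𝕜) / (N / C) ≤ s := by
    rwa [div_div_div_cancel_right₀ hC', div_le_iff₀ hN, mul_comm (r : 𝕜)]
  rw [← uncodedRate_choose_mul_div hC]
  have hrate := one_sub_mul_choose_le_uncodedRate r (by positivity) hN.le hweight
  have hpos := (mul_pos hs' hK).trans_le hrate
  exact ⟨hpos, (div_le_iff₀ hpos).2 ((le_inv_mul_iff₀ hs').2 hrate)⟩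

end MemorySharing

/-- **Theorem 6, part 1**: with `K = C(C,r)` and
`R* = K − (K²·r/N)·(1 − (C − r)/(C·(r + 1)))` the optimal rate under uncoded placement
at memory point `M = r·C(C,r)/C`, if `N ≥ 2·K·r` then `R* > 0` and `K / R* ≤ 2`;
i.e., the SP-LFR scheme is within a multiplicative factor `2` of the optimum. -/
theorem sp_lfr_gap (C r : ℕ) (hC : 0 < C) (hr : 0 < r) (hrC : r ≤ C)
    (N : ℝ) (hN : N ≥ 2 * (C.choose r : ℝ) * r) :
    0 < (C.choose r : ℝ) -
        ((C.choose r : ℝ) ^ 2 * r / N) * (1 - ((C : ℝ) - r) / ((C : ℝ) * (r + 1))) ∧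
    (C.choose r : ℝ) /
        ((C.choose r : ℝ) -
          ((C.choose r : ℝ) ^ 2 * r / N) * (1 - ((C : ℝ) - r) / ((C : ℝ) * (r + 1)))) ≤ 2 := by
  have hK : (0 : ℝ) < C.choose r := Nat.cast_pos.2 (Nat.choose_pos hrC)
  have hN_pos : 0 < N := lt_of_lt_of_le (by positivity) hN
  obtain ⟨hpos, hgap⟩ := sp_lfr_gap_general (s := 1 / 2) hC.ne' hrC hN_pos (by norm_num)
    (by linarith)
  exact ⟨hpos, hgap.trans_eq (by norm_num)⟩
end

section
/- Let F be a finite field, let k ≥ 1, and let x_1, …, x_k be k pairwise distinct nonzero elements of F. For a secret D ∈ F and a coefficient vector a = (a_1, …, a_{k−1}) ∈ F^{k−1}, define the shares s_j(D, a) = D + Σ_{i=1}^{k−1} a_i · x_j^i for j = 1, …, k. If (D, a) and (D′, a′) produce the same shares, i.e., s_j(D, a) = s_j(D′, a′) for all j ∈ {1, …, k}, then D = D′ and a = a′. In particular, the secret D is uniquely reconstructable from all k shares. -/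
/-!
The shares of `(D, a)` are the values of the polynomial `q = D + a₁ X + ⋯ + aₘ Xᵐ`. Over a domain a
polynomial of degree at most `m` is determined by its values at `m + 1` distinct points, and the
coefficients of `q` are the secret `D` and the entries of `a`.
-/

open Polynomial
open scoped Finset

section SharingPolynomial

variable {R : Type*} [Semiring R] {m : ℕ}

/-- Shamir's polynomial `q(X) = D + a₁ X + ⋯ + aₘ Xᵐ`, which hides the secret `D` as its constant
term and whose values are the shares. The paper's `aᵢ₊₁` is the entry `a i`, `i` being counted from
zero. -/
noncomputable def sharingPolynomial (D : R) (a : Fin m → R) : R[X] :=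
  C D + ∑ i : Fin m, C (a i) * X ^ ((i : ℕ) + 1)

theorem eval_sharingPolynomial (D : R) (a : Fin m → R) (x : R) :
    (sharingPolynomial D a).eval x = D + ∑ i : Fin m, a i * x ^ ((i : ℕ) + 1) := by
  simp [sharingPolynomial, eval_finsetSum]

theorem degree_sharingPolynomial_le (D : R) (a : Fin m → R) :
    (sharingPolynomial D a).degree ≤ m := by
  refine degree_add_le_of_degree_le (degree_C_le.trans (mod_cast m.zero_le)) ?_
  refine (degree_sum_le _ _).trans <| Finset.sup_le fun i _ => (degree_C_mul_X_pow_le _ _).trans ?_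
  exact_mod_cast i.isLt

theorem coeff_zero_sharingPolynomial (D : R) (a : Fin m → R) :
    (sharingPolynomial D a).coeff 0 = D := by
  simp [sharingPolynomial]

theorem coeff_succ_sharingPolynomial (D : R) (a : Fin m → R) (i : Fin m) :
    (sharingPolynomial D a).coeff ((i : ℕ) + 1) = a i := by
  simp [sharingPolynomial, coeff_X_pow, Fin.val_inj]

theorem sharingPolynomial_inj {D D' : R} {a a' : Fin m → R} :
    sharingPolynomial D a = sharingPolynomial D' a' ↔ D = D' ∧ a = a' := by
  refine ⟨fun h => ⟨?_, funext fun i => ?_⟩, fun ⟨hD, ha⟩ => hD ▸ ha ▸ rfl⟩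
  · simpa only [coeff_zero_sharingPolynomial] using congrArg (coeff · 0) h
  · simpa only [coeff_succ_sharingPolynomial] using congrArg (coeff · ((i : ℕ) + 1)) h

end SharingPolynomial

theorem shamir_reconstruction_general {R ι : Type*} [CommRing R] [IsDomain R] {m : ℕ}
    {s : Finset ι} (hs : m < #s) {x : ι → R} (hx : Set.InjOn x s)
    {D D' : R} {a a' : Fin m → R}
    (h : ∀ j ∈ s,
      D + ∑ i : Fin m, a i * x j ^ ((i : ℕ) + 1) =
      D' + ∑ i : Fin m, a' i * x j ^ ((i : ℕ) + 1)) :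
    D = D' ∧ a = a' := by
  have degree_lt (D : R) (a : Fin m → R) : (sharingPolynomial D a).degree < #s :=
    (degree_sharingPolynomial_le D a).trans_lt (mod_cast hs)
  simp only [← eval_sharingPolynomial] at h
  exact sharingPolynomial_inj.mp <|
    eq_of_degrees_lt_of_eval_index_eq s hx (degree_lt _ _) (degree_lt _ _) h

/-- **Reconstruction property of Shamir's secret sharing**: let `x 0, …, x (k-1)` be
`k` pairwise distinct nonzero elements of a finite field `F`.  The shares of a secret
`D` with coefficient vector `a ∈ F^(k-1)` are `s j = D + ∑ i, a i · (x j)^(i+1)`,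
i.e. the evaluations of the polynomial `q(X) = D + a_1 X + ⋯ + a_{k−1} X^{k−1}` at the
`k` points.  If two pairs `(D, a)` and `(D', a')` produce the same `k` shares, then
`D = D'` and `a = a'`; in particular the secret is uniquely reconstructable from all
`k` shares. -/
theorem shamir_reconstruction {F : Type*} [Field F] [Fintype F]
    (k : ℕ) (hk : 1 ≤ k)
    (x : Fin k → F) (hx_inj : Function.Injective x) (hx_ne : ∀ j, x j ≠ 0)
    (D D' : F) (a a' : Fin (k - 1) → F)
    (h : ∀ j : Fin k,
      D + ∑ i : Fin (k - 1), a i * x j ^ ((i : ℕ) + 1) =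
      D' + ∑ i : Fin (k - 1), a' i * x j ^ ((i : ℕ) + 1)) :
    D = D' ∧ a = a' := by
  have hcard : k - 1 < #(Finset.univ : Finset (Fin k)) := by rw [Finset.card_fin]; lia
  exact shamir_reconstruction_general hcard hx_inj.injOn fun j _ => h j
end

section
/- Let F be a finite field, let k ≥ 2, and let x_1, …, x_{k−1} be k−1 pairwise distinct nonzero elements of F. For every fixed secret D ∈ F, the map from F^{k−1} to F^{k−1} sending a coefficient vector a = (a_1, …, a_{k−1}) to the share vector (D + Σ_{i=1}^{k−1} a_i · x_1^i, …, D + Σ_{i=1}^{k−1} a_i · x_{k−1}^i, ) restricted to its first k−1 outputs, i.e., a ↦ (q_a(x_1), …, q_a(x_{k−1})) where q_a(x) = D + Σ_{i=1}^{k−1} a_i x^i, is a bijection of F^{k−1}. Consequently, for each fixed vector of k−1 share values and each candidate secret D, there is exactly one coefficient vector a consistent with those shares, so when a is chosen uniformly at random from F^{k−1}, any k−1 shares are jointly uniform on F^{k−1} and statistically independent of the secret D. -/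
/-!
The shares of `a` are `D + (diag(x) V(x)) a` with `V(x)` the Vandermonde matrix: taking the
constant term out of the polynomial leaves a common factor `x j` in the `j`-th share. The
determinant of `diag(x) V(x)` is `(∏ j, x j) * ∏ i < j, (x j - x i)`, a unit exactly when the
points and their pairwise differences are units.
-/

section

open Matrix

variable {R : Type*} [CommRing R]

theorem mulVec_bijective_iff_isUnit {m : Type*} [Fintype m] [DecidableEq m] {A : Matrix m m R} :
    Function.Bijective A.mulVec ↔ IsUnit A :=
  ⟨fun h => mulVec_surjective_iff_isUnit.mp h.surjective,
    fun h => ⟨mulVec_injective_of_isUnit h, mulVec_surjective_iff_isUnit.mpr h⟩⟩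

variable {n : ℕ}

theorem isUnit_vandermonde_iff {v : Fin n → R} :
    IsUnit (vandermonde v) ↔ Pairwise fun i j => IsUnit (v i - v j) := by
  have isUnit_iff_of_lt :
      IsUnit (vandermonde v) ↔ ∀ i j, i < j → IsUnit (v j - v i) := by
    simp only [isUnit_iff_isUnit_det, det_vandermonde, IsUnit.prod_iff, Finset.mem_univ,
      Finset.mem_Ioi, true_imp_iff]
  rw [isUnit_iff_of_lt]
  refine ⟨fun h i j hij => ?_, fun h i j hij => h hij.ne'⟩
  rcases hij.lt_or_gt with hlt | hgt
  · exact IsUnit.sub_iff.mp (h i j hlt)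
  · exact h j i hgt

theorem isUnit_diagonal_mul_vandermonde_iff {v : Fin n → R} :
    IsUnit (diagonal v * vandermonde v) ↔
      (∀ i, IsUnit (v i)) ∧ Pairwise fun i j => IsUnit (v i - v j) := by
  rw [isUnit_iff_isUnit_det, det_mul, IsUnit.mul_iff, ← isUnit_iff_isUnit_det,
    ← isUnit_iff_isUnit_det, isUnit_diagonal, Pi.isUnit_iff, isUnit_vandermonde_iff]

/-- The shares at the points `x` of the secret `D` under Shamir's scheme, for the polynomial
with constant term `D`. Indices start at `0`: `a i` is the coefficient of degree `i + 1`. -/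
def shamirShares (D : R) (x a : Fin n → R) : Fin n → R :=
  fun j => D + ∑ i, a i * x j ^ ((i : ℕ) + 1)

theorem shamirShares_eq_add_mulVec (D : R) (x a : Fin n → R) :
    shamirShares D x a = Function.const (Fin n) D + (diagonal x * vandermonde x) *ᵥ a := by
  ext j
  simp only [shamirShares, Pi.add_apply, Function.const_apply, mulVec, dotProduct,
    diagonal_mul, vandermonde_apply, pow_succ', mul_comm (a _)]

theorem shamir_secrecy_general (D : R) (x : Fin n → R) :
    Function.Bijective (shamirShares D x) ↔
      (∀ j, IsUnit (x j)) ∧ Pairwise fun i j => IsUnit (x i - x j) := by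
  have shares_eq_comp : shamirShares D x =
      Equiv.addLeft (Function.const (Fin n) D) ∘ (diagonal x * vandermonde x).mulVec :=
    funext (shamirShares_eq_add_mulVec D x)
  rw [shares_eq_comp, Equiv.comp_bijective, mulVec_bijective_iff_isUnit,
    isUnit_diagonal_mul_vandermonde_iff]

end

/-- **Secrecy property of Shamir's secret sharing**: let `x 0, …, x (k-2)` be `k − 1`
pairwise distinct nonzero elements of a finite field `F` and fix a secret `D ∈ F`.
The map sending a coefficient vector `a ∈ F^(k-1)` to the vector of the `k − 1` shares
`(q_a(x 0), …, q_a(x (k-2)))`, where `q_a(X) = D + a_1 X + ⋯ + a_{k−1} X^{k−1}`, is a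
bijection of `F^(k-1)`.  Consequently, for each fixed vector of `k − 1` share values
and each candidate secret `D` there is exactly one consistent coefficient vector, so
when `a` is uniform on `F^(k-1)` any `k − 1` shares are jointly uniform and
statistically independent of `D`. -/
theorem shamir_secrecy {F : Type*} [Field F] [Fintype F]
    (k : ℕ) (hk : 2 ≤ k)
    (x : Fin (k - 1) → F) (hx_inj : Function.Injective x) (hx_ne : ∀ j, x j ≠ 0)
    (D : F) :
    Function.Bijective
      (fun a : Fin (k - 1) → F =>
        (fun j : Fin (k - 1) => D + ∑ i : Fin (k - 1), a i * x j ^ ((i : ℕ) + 1))) ∧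
    ∀ s : Fin (k - 1) → F,
      ∃! a : Fin (k - 1) → F,
        (fun j : Fin (k - 1) => D + ∑ i : Fin (k - 1), a i * x j ^ ((i : ℕ) + 1)) = s := by
  have hbij : Function.Bijective (shamirShares D x) := (shamir_secrecy_general D x).mpr
    ⟨fun j => (hx_ne j).isUnit, fun _ _ hij => (sub_ne_zero.mpr (hx_inj.ne hij)).isUnit⟩
  exact ⟨hbij, hbij.existsUnique⟩
end
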